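/- For every natural number n ≥ 1, the set of tuples (r₁, …, r_{n−1}) with 0 < r₁ < … < r_{n−1} < 1 such that there exists a compact packing of the Euclidean plane by disks of radii r₁, …, r_{n−1}, 1 in which all n radii are actually used is finite. -/

import Mathlib

open Metric Set

noncomputable section

/-- The Euclidean plane. -/
abbrev Plane : Type := EuclideanSpace ℝ (Fin 2)

/-- A closed disk in the plane, given by its center and (positive) radius. -/
structure Disk where
  center : Plane
  radius : ℝ
  radius_pos : 0 < radius

/-- The set of points of a disk (a closed ball). -/
def Disk.set (d : Disk) : Set Plane := closedBall d.center d.radius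

/-- A packing: a family of closed disks with pairwise disjoint interiors. -/
def IsPacking (P : Set Disk) : Prop :=
  ∀ d ∈ P, ∀ d' ∈ P, d ≠ d' → Disjoint (interior d.set) (interior d'.set)

/-- Two disks are (externally) tangent: they intersect in exactly one point. -/
def Disk.Tangent (d d' : Disk) : Prop :=
  dist d.center d'.center = d.radius + d'.radius

/-- The union of the disks of a packing. -/
def packingUnion (P : Set Disk) : Set Plane := ⋃ d ∈ P, d.set

/-- A packing is compact (triangulated) if every connected component of the
complement of the union of the disks is bounded and its closure meets exactly
three of the disks, these three disks being pairwise tangent. -/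
def IsCompactPacking (P : Set Disk) : Prop :=
  IsPacking P ∧
  ∀ x ∈ (packingUnion P)ᶜ,
    Bornology.IsBounded (connectedComponentIn (packingUnion P)ᶜ x) ∧
    ∃ d₁ d₂ d₃ : Disk, d₁ ∈ P ∧ d₂ ∈ P ∧ d₃ ∈ P ∧
      d₁ ≠ d₂ ∧ d₁ ≠ d₃ ∧ d₂ ≠ d₃ ∧
      d₁.Tangent d₂ ∧ d₁.Tangent d₃ ∧ d₂.Tangent d₃ ∧
      {d ∈ P | (closure (connectedComponentIn (packingUnion P)ᶜ x) ∩ d.set).Nonempty}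
        = {d₁, d₂, d₃}

/-- A packing uses the radius `r` if one of its disks has radius `r`. -/
def UsesRadius (P : Set Disk) (r : ℝ) : Prop := ∃ d ∈ P, d.radius = r

/-- All radii of the disks of `P` belong to `S`. -/
def RadiiIn (P : Set Disk) (S : Set ℝ) : Prop := ∀ d ∈ P, d.radius ∈ S

/-- The square `[-r, r]²`. -/
def square (r : ℝ) : Set Plane := {x | |x 0| ≤ r ∧ |x 1| ≤ r}

/-- The density of a packing: the limsup, as `r → ∞`, of the proportion of the
square `[-r, r]²` covered by the disks. -/
def density (P : Set Disk) : ℝ :=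
  Filter.limsup
    (fun r : ℝ => (MeasureTheory.volume (packingUnion P ∩ square r)).toReal / (4 * r ^ 2))
    Filter.atTop

end

/-!
Describe a compact packing by the curvatures (inverse radii) of its disks. Around each disk the
angles of the triangles joining it to pairs of consecutive neighbors add up to `2π`, and these
angles strictly decrease when the curvature of a neighbor grows. By the maximum principle, the
coronas of the disks therefore determine the curvatures up to scaling, as soon as they link all the
radii in use; they do, because the plane minus the countably many contact points is connected.

There are infinitely many conceivable systems of coronas, since a large disk has many small
neighbors. But infinitely many solutions, rescaled to have largest curvature `1`, would accumulate
at a nonzero system `ξ` of curvatures in `[0, 1]`. Disks with `ξ > 0` have boundedly many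
neighbors, so along an ultrafilter their coronas are constant, and `ξ` solves them. The maximum
principle needs the coronas only where `ξ > 0`, so all these solutions are proportional to `ξ`, a
contradiction.
-/

open Filter Real Topology

section HalfAngle

/-- The half-angle at the center of a disk of curvature `x` between the centers of two disks of
curvatures `y` and `z`, the three disks being mutually tangent. Curvatures (inverse radii) are used
because `y = 0` and `z = 0` make sense: these are the limits in which a neighbor grows into a
half-plane. -/
noncomputable def halfAngle (x y z : ℝ) : ℝ := arcsin √(x / (x + y) * (x / (x + z)))

variable {x y z : ℝ}

lemma halfAngle_mul_left {μ : ℝ} (hμ : μ ≠ 0) (x y z : ℝ) :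
    halfAngle (μ * x) (μ * y) (μ * z) = halfAngle x y z := by
  simp only [halfAngle, ← mul_add, mul_div_mul_left _ _ hμ]

lemma halfAngle_nonneg (x y z : ℝ) : 0 ≤ halfAngle x y z := arcsin_nonneg.2 (sqrt_nonneg _)

lemma div_self_add_le_one (hx : 0 ≤ x) (hy : 0 ≤ y) : x / (x + y) ≤ 1 :=
  div_le_one_of_le₀ (by linarith) (by linarith)

lemma halfAngle_arg_le_one (hx : 0 ≤ x) (hy : 0 ≤ y) (hz : 0 ≤ z) :
    √(x / (x + y) * (x / (x + z))) ≤ 1 :=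
  sqrt_le_one.2 <|
    mul_le_one₀ (div_self_add_le_one hx hy) (by positivity) (div_self_add_le_one hx hz)

lemma halfAngle_le_halfAngle {y' z' : ℝ} (hx : 0 < x) (hy : 0 ≤ y) (hz : 0 ≤ z) (hyy' : y ≤ y')
    (hzz' : z ≤ z') : halfAngle x y' z' ≤ halfAngle x y z := by
  have := hy.trans hyy'
  have := hz.trans hzz'
  unfold halfAngle
  gcongr

lemma halfAngle_lt_halfAngle {y' z' : ℝ} (hx : 0 < x) (hy : 0 ≤ y) (hz : 0 ≤ z)
    (h : (y, z) < (y', z')) : halfAngle x y' z' < halfAngle x y z := by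
  have := hy.trans h.le.1
  have := hz.trans h.le.2
  refine arcsin_lt_arcsin (neg_one_lt_zero.le.trans (sqrt_nonneg _))
    (sqrt_lt_sqrt (by positivity) ?_) (halfAngle_arg_le_one hx.le hy hz)
  rcases Prod.mk_lt_mk.1 h with ⟨h₁, h₂⟩ | ⟨h₁, h₂⟩
  · exact mul_lt_mul (by gcongr) (by gcongr) (by positivity) (by positivity)
  · exact mul_lt_mul' (by gcongr) (by gcongr) (by positivity) (by positivity)

lemma half_le_halfAngle {c : ℝ} (hc : 0 < c) (hcx : c ≤ x) (hx : x ≤ 1) (hy : y ∈ Icc 0 1)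
    (hz : z ∈ Icc 0 1) : c / 2 ≤ halfAngle x y z := by
  have frac {w : ℝ} (hw : w ∈ Icc 0 1) : c / 2 ≤ x / (x + w) :=
    div_le_div₀ (by linarith) hcx (by linarith [hw.1]) (by linarith [hw.2])
  have arg : c / 2 ≤ √(x / (x + y) * (x / (x + z))) :=
    le_sqrt_of_sq_le <| sq (c / 2) ▸ mul_le_mul (frac hy) (frac hz) (by positivity)
      ((half_pos hc).le.trans (frac hy))
  have hs := halfAngle_arg_le_one (hc.le.trans hcx) hy.1 hz.1
  calc c / 2 ≤ √(x / (x + y) * (x / (x + z))) := arg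
    _ = sin (halfAngle x y z) :=
      (sin_arcsin (neg_one_lt_zero.le.trans (sqrt_nonneg _)) hs).symm
    _ ≤ halfAngle x y z := sin_le (halfAngle_nonneg x y z)

lemma tendsto_halfAngle {α : Type*} {l : Filter α} {f g h : α → ℝ} (hx : 0 < x) (hy : 0 ≤ y)
    (hz : 0 ≤ z) (hf : Tendsto f l (𝓝 x)) (hg : Tendsto g l (𝓝 y)) (hh : Tendsto h l (𝓝 z)) :
    Tendsto (fun a => halfAngle (f a) (g a) (h a)) l (𝓝 (halfAngle x y z)) :=
  (continuous_arcsin.comp continuous_sqrt).continuousAt.tendsto.comp <|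
    (hf.div (hf.add hg) (by positivity)).mul (hf.div (hf.add hh) (by positivity))

end HalfAngle

section CoronaSystem

variable {ι : Type*}

/-- A combinatorial corona: the label of a central disk together with the multiset of ordered pairs
of labels of consecutive neighbors, each pair of neighbors being listed in both orders. -/
abbrev Corona (ι : Type*) : Type _ := ι × Multiset (ι × ι)

/-- The sum of the half-angles around the center of the corona `q` when the disks labelled `i` have
curvature `κ i`. -/
noncomputable def Corona.angleSum (q : Corona ι) (κ : ι → ℝ) : ℝ :=
  (q.2.map fun p => halfAngle (κ q.1) (κ p.1) (κ p.2)).sum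

/-- The curvatures `κ` realize the coronas in `N`: the angles around each center add up to a full
turn. As each pair of neighbors is listed twice, the half-angles add up to `2π` rather than `π`. -/
def SolvesCoronas (N : Set (Corona ι)) (κ : ι → ℝ) : Prop := ∀ q ∈ N, q.angleSum κ = 2 * π

/-- The coronas in `N` link all the labels: a nonempty set of labels that contains the neighbors
occurring in each corona centerd in it contains every label. -/
def CoronasConnected (N : Set (Corona ι)) : Prop :=
  ∀ S : Set ι, S.Nonempty → (∀ q ∈ N, q.1 ∈ S → ∀ p ∈ q.2, p.1 ∈ S ∧ p.2 ∈ S) → S = univ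

lemma Corona.angleSum_smul (q : Corona ι) {μ : ℝ} (hμ : μ ≠ 0) (κ : ι → ℝ) :
    q.angleSum (μ • κ) = q.angleSum κ := by
  simp only [angleSum, Pi.smul_apply, smul_eq_mul, halfAngle_mul_left hμ]

lemma SolvesCoronas.smul {N : Set (Corona ι)} {κ : ι → ℝ} (h : SolvesCoronas N κ) {μ : ℝ}
    (hμ : μ ≠ 0) : SolvesCoronas N (μ • κ) := fun q hq =>
  (q.angleSum_smul hμ κ).trans (h q hq)

lemma Corona.tendsto_angleSum {α : Type*} {l : Filter α} {κ : α → ι → ℝ} {ξ : ι → ℝ}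
    {q : Corona ι} (h : Tendsto κ l (𝓝 ξ)) (hξ : 0 ≤ ξ) (hq : 0 < ξ q.1) :
    Tendsto (fun a => q.angleSum (κ a)) l (𝓝 (q.angleSum ξ)) :=
  tendsto_multiset_sum _ fun _ _ =>
    tendsto_halfAngle hq (hξ _) (hξ _) (h.apply_nhds _) (h.apply_nhds _) (h.apply_nhds _)

/-- The maximum principle: angles at a disk of fixed curvature strictly decrease when the curvature
of a neighbor grows, so the set where the two solutions agree is closed under neighbors. -/
lemma SolvesCoronas.eq_of_le_of_exists_eq {N : Set (Corona ι)} {κ ξ : ι → ℝ}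
    (hN : CoronasConnected N) (hκ : ∀ i, 0 < κ i) (hκN : SolvesCoronas N κ) (hξ : 0 ≤ ξ)
    (hξN : SolvesCoronas {q ∈ N | 0 < ξ q.1} ξ) (hle : ξ ≤ κ) (heq : ∃ i, ξ i = κ i) :
    ξ = κ := by
  suffices {i | ξ i = κ i} = univ from funext fun i => this.ge (mem_univ i)
  refine hN _ heq fun q hq (hi : ξ q.1 = κ q.1) p hp => ?_
  have angle_le (p : ι × ι) :
      halfAngle (κ q.1) (κ p.1) (κ p.2) ≤ halfAngle (κ q.1) (ξ p.1) (ξ p.2) :=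
    halfAngle_le_halfAngle (hκ _) (hξ _) (hξ _) (hle _) (hle _)
  by_contra hne
  have lt : (ξ p.1, ξ p.2) < (κ p.1, κ p.2) :=
    lt_of_le_of_ne ⟨hle p.1, hle p.2⟩ fun h => hne (Prod.mk.inj h)
  have angle_lt := halfAngle_lt_halfAngle (hκ q.1) (hξ _) (hξ _) lt
  have : q.angleSum κ < q.angleSum ξ := by
    rw [Corona.angleSum, Corona.angleSum, hi]
    exact Multiset.sum_lt_sum (fun p _ => angle_le p) ⟨p, hp, angle_lt⟩
  rw [hκN q hq, hξN q ⟨hq, by rw [hi]; exact hκ q.1⟩] at this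
  exact this.false

lemma SolvesCoronas.exists_eq_smul [Finite ι] {N : Set (Corona ι)} {κ ξ : ι → ℝ}
    (hN : CoronasConnected N) (hκ : ∀ i, 0 < κ i) (hκN : SolvesCoronas N κ) (hξ : 0 ≤ ξ)
    (hξN : SolvesCoronas {q ∈ N | 0 < ξ q.1} ξ) (hξ0 : ξ ≠ 0) : ∃ μ : ℝ, κ = μ • ξ := by
  have hne : {i | 0 < ξ i}.Nonempty := by
    by_contra h
    exact hξ0 (funext fun i => le_antisymm (not_lt.1 fun hi => h ⟨i, hi⟩) (hξ i))
  obtain ⟨k, hk, hmin⟩ := exists_min_image {i | 0 < ξ i} (fun i => κ i / ξ i) (toFinite _) hne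
  have hμ : 0 < κ k / ξ k := div_pos (hκ k) hk
  have hpos (i : ι) : 0 < ((κ k / ξ k) • ξ) i ↔ 0 < ξ i := mul_pos_iff_of_pos_left hμ
  refine ⟨κ k / ξ k, (hκN.eq_of_le_of_exists_eq hN hκ (smul_nonneg hμ.le hξ) ?_ (fun i => ?_)
    ⟨k, div_mul_cancel₀ _ hk.ne'⟩).symm⟩
  · simp only [hpos]
    exact hξN.smul hμ.ne'
  · rcases (hξ i).eq_or_lt with hi | hi
    · simpa [← hi] using (hκ i).le
    · exact (le_div_iff₀ hi).1 (hmin i hi)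

lemma Corona.card_le_of_angleSum_eq {q : Corona ι} {κ : ι → ℝ} {c : ℝ} (hc : 0 < c)
    (hκ : κ ∈ Icc 0 1) (hq : c ≤ κ q.1) (h : q.angleSum κ = 2 * π) :
    Multiset.card q.2 ≤ ⌊4 * π / c⌋₊ := by
  have hI (i : ι) : κ i ∈ Icc 0 1 := ⟨hκ.1 i, hκ.2 i⟩
  have : Multiset.card q.2 • (c / 2) ≤ 2 * π := by
    rw [← h, ← Multiset.card_map fun p => halfAngle (κ q.1) (κ p.1) (κ p.2)]
    refine Multiset.card_nsmul_le_sum fun a ha => ?_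
    obtain ⟨p, -, rfl⟩ := Multiset.mem_map.1 ha
    exact half_le_halfAngle hc hq (hI _).2 (hI _) (hI _)
  rw [nsmul_eq_mul] at this
  exact Nat.le_floor ((le_div_iff₀ hc).2 (by linarith))

lemma finite_setOf_card_le {α : Type*} [Finite α] (n : ℕ) :
    {s : Multiset α | Multiset.card s ≤ n}.Finite := by
  classical
  have := Fintype.ofFinite α
  refine (finite_Icc 0 (n • (Finset.univ : Finset α).val)).subset fun s hs =>
    ⟨Multiset.zero_le _, Multiset.le_iff_count.2 fun a => ?_⟩
  simpa using (Multiset.count_le_card a s).trans hs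

/-- The disks whose curvature stays away from zero have coronas of bounded size, and there are only
finitely many sets of such coronas. -/
lemma exists_eventually_coronas_eq [Finite ι] {α : Type*} {F : Ultrafilter α}
    {N : α → Set (Corona ι)} {κ : α → ι → ℝ} {ξ : ι → ℝ} (hκ : ∀ a, κ a ∈ Icc 0 1)
    (hN : ∀ a, SolvesCoronas (N a) (κ a)) (hlim : Tendsto κ F (𝓝 ξ)) :
    ∃ M, ∀ᶠ a in F, {q ∈ N a | 0 < ξ q.1} = M := by
  obtain ⟨c, hcξ, hc : 0 < c⟩ : ∃ c, (∀ i, 0 < ξ i → c < ξ i) ∧ 0 < c :=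
    ((eventually_all.2 fun i => eventually_imp_distrib_left.2 fun hi =>
      eventually_nhdsWithin_of_eventually_nhds (eventually_lt_nhds hi)).and
        (self_mem_nhdsWithin (s := Ioi (0 : ℝ)))).exists
  have hfin : {q : Corona ι | Multiset.card q.2 ≤ ⌊4 * π / c⌋₊}.Finite :=
    (finite_univ.prod (finite_setOf_card_le _)).subset fun q hq => ⟨mem_univ _, hq⟩
  have hlt : ∀ᶠ a in F, ∀ i, 0 < ξ i → c < κ a i :=
    eventually_all.2 fun i => eventually_imp_distrib_left.2 fun hi =>
      (hlim.apply_nhds i).eventually_const_lt (hcξ i hi)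
  have : ∀ᶠ a in F, ∃ M ∈ 𝒫 {q : Corona ι | Multiset.card q.2 ≤ ⌊4 * π / c⌋₊},
      {q ∈ N a | 0 < ξ q.1} = M := by
    filter_upwards [hlt] with a ha
    exact ⟨_, fun q hq =>
      Corona.card_le_of_angleSum_eq hc (hκ a) (ha q.1 hq.2).le (hN a q hq.1), rfl⟩
  obtain ⟨M, -, hM⟩ := (Ultrafilter.eventually_exists_mem_iff hfin.finite_subsets).1 this
  exact ⟨M, hM⟩

lemma isCompact_setOf_Icc_exists_eq_one [Finite ι] :
    IsCompact {x : ι → ℝ | x ∈ Icc 0 1 ∧ ∃ i, x i = 1} := by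
  have : IsClosed {x : ι → ℝ | ∃ i, x i = 1} := by
    simp only [ofPred_exists]
    exact isClosed_iUnion_of_finite fun i => isClosed_eq (continuous_apply i) continuous_const
  exact isCompact_Icc.inter_right this

lemma exists_smul_mem_Icc_exists_eq_one [Finite ι] [Nonempty ι] {κ : ι → ℝ} (hκ : ∀ i, 0 < κ i) :
    ∃ μ : ℝ, μ ≠ 0 ∧ μ • κ ∈ Icc 0 1 ∧ ∃ i, (μ • κ) i = 1 := by
  obtain ⟨k, hk⟩ := Finite.exists_max κ
  refine ⟨(κ k)⁻¹, (inv_pos.2 (hκ k)).ne', ⟨fun i => ?_, fun i => ?_⟩, k, ?_⟩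
  · exact mul_nonneg (inv_pos.2 (hκ k)).le (hκ i).le
  · exact (inv_mul_le_one₀ (hκ k)).2 (hk i)
  · exact inv_mul_cancel₀ (hκ k).ne'

theorem finite_setOf_solvesCoronas [Finite ι] (e : ι) :
    {κ : ι → ℝ | (∀ i, 0 < κ i) ∧ κ e = 1 ∧
      ∃ N, CoronasConnected N ∧ SolvesCoronas N κ}.Finite := by
  have : Nonempty ι := ⟨e⟩
  by_contra hinf
  set X := {κ : ι → ℝ | (∀ i, 0 < κ i) ∧ κ e = 1 ∧ ∃ N, CoronasConnected N ∧ SolvesCoronas N κ}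
  have : Infinite X := infinite_coe_iff.2 hinf
  let F : Ultrafilter X := hyperfilter X
  choose N hconn hN using fun κ : X => κ.2.2.2
  choose μ hμ hIcc using fun κ : X => exists_smul_mem_Icc_exists_eq_one κ.2.1
  obtain ⟨ξ, ⟨hξ, i, hξi⟩, hlim⟩ := isCompact_setOf_Icc_exists_eq_one.ultrafilter_le_nhds
    (F.map fun κ => μ κ • κ.1) (tendsto_principal.2 (.of_forall hIcc))
  have hlim : Tendsto (fun κ => μ κ • κ.1) F (𝓝 ξ) := hlim
  have hsol (κ : X) : SolvesCoronas (N κ) (μ κ • κ.1) := (hN κ).smul (hμ κ)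
  obtain ⟨M, hM⟩ := exists_eventually_coronas_eq (fun κ => (hIcc κ).1) hsol hlim
  have hξM : SolvesCoronas M ξ := fun q hq => by
    obtain ⟨κ, rfl⟩ := hM.exists
    refine tendsto_nhds_unique (Corona.tendsto_angleSum hlim hξ.1 hq.2)
      (tendsto_const_nhds.congr' ?_)
    filter_upwards [hM] with κ' h
    exact (hsol κ' q (h.ge hq).1).symm
  have hξ0 : ξ ≠ 0 := by
    rintro rfl
    exact zero_ne_one hξi
  have hconst : ∀ᶠ κ in (F : Filter X), κ.1 = (ξ e)⁻¹ • ξ := by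
    filter_upwards [hM] with κ h
    obtain ⟨ν, hν⟩ := (hN κ).exists_eq_smul (hconn κ) κ.2.1 hξ.1 (by rwa [h]) hξ0
    have : ν * ξ e = 1 := (congrFun hν e).symm.trans κ.2.2.1
    rw [hν, eq_inv_of_mul_eq_one_left this]
  refine notMem_hyperfilter_of_finite (Subsingleton.finite fun κ hκ κ' hκ' => ?_) hconst
  exact Subtype.ext (Eq.trans hκ (Eq.symm hκ'))

end CoronaSystem

section Packing

lemma Disk.isClosed_set (d : Disk) : IsClosed d.set := isClosed_closedBall

lemma Disk.interior_set (d : Disk) : interior d.set = ball d.center d.radius :=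
  interior_closedBall _ d.radius_pos.ne'

lemma Disk.add_smul_mem_set_iff {d : Disk} {u : Plane} {s : ℝ} (hu : ‖u‖ = 1) (hs : 0 ≤ s) :
    d.center + s • u ∈ d.set ↔ s ≤ d.radius := by
  simp [Disk.set, norm_smul, hu, abs_of_nonneg hs]

lemma Disk.Tangent.symm {d e : Disk} (h : d.Tangent e) : e.Tangent d := by
  rw [Disk.Tangent, dist_comm, h, add_comm]

lemma Disk.Tangent.ne {d e : Disk} (h : d.Tangent e) : d ≠ e := by
  rintro rfl
  rw [Disk.Tangent, dist_self] at h
  linarith [d.radius_pos]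

lemma Disk.Tangent.nonempty_inter {d e : Disk} (h : d.Tangent e) : (d.set ∩ e.set).Nonempty := by
  obtain ⟨x, hx⟩ := exists_dist_le_le d.radius_pos.le e.radius_pos.le (h.le.trans_eq (add_comm _ _))
  exact ⟨x, mem_closedBall'.2 hx.1, hx.2⟩

lemma Disk.exists_ball_subset_interior {d : Disk} {y : Plane} {ρ : ℝ} (hy : y ∈ d.set)
    (hρ : 0 ≤ ρ) (hd : ρ ≤ d.radius) : ∃ z, dist z y ≤ ρ ∧ ball z ρ ⊆ interior d.set := by
  have hr := d.radius_pos
  have ht : 0 ≤ 1 - ρ / d.radius := sub_nonneg.2 ((div_le_one hr).2 hd)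
  refine ⟨AffineMap.lineMap y d.center (ρ / d.radius), ?_, ?_⟩
  · calc dist (AffineMap.lineMap y d.center (ρ / d.radius)) y
        = ρ / d.radius * dist y d.center := by
          rw [dist_lineMap_left, Real.norm_of_nonneg (by positivity)]
      _ ≤ ρ / d.radius * d.radius := by gcongr; exact hy
      _ = ρ := div_mul_cancel₀ ρ hr.ne'
  · rw [d.interior_set]
    refine ball_subset_ball' ?_
    calc ρ + dist (AffineMap.lineMap y d.center (ρ / d.radius)) d.center
        = ρ + (1 - ρ / d.radius) * dist y d.center := by
          rw [dist_lineMap_right, Real.norm_of_nonneg ht]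
      _ ≤ ρ + (1 - ρ / d.radius) * d.radius := by gcongr; exact hy
      _ = d.radius := by field_simp; ring

variable {P : Set Disk}

lemma subset_packingUnion {d : Disk} (hd : d ∈ P) : d.set ⊆ packingUnion P :=
  subset_biUnion_of_mem hd

lemma mem_packingUnion {x : Plane} : x ∈ packingUnion P ↔ ∃ d ∈ P, x ∈ d.set := by
  simp [packingUnion]

lemma IsPacking.subsingleton_inter (hP : IsPacking P) {d e : Disk} (hd : d ∈ P) (he : e ∈ P)
    (hne : d ≠ e) : (d.set ∩ e.set).Subsingleton := by
  rintro x ⟨hxd, hxe⟩ y ⟨hyd, hye⟩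
  by_contra hxy
  have mem_interior {f : Disk} (hx : x ∈ f.set) (hy : y ∈ f.set) :
      (1 / 2 : ℝ) • x + (1 / 2 : ℝ) • y ∈ interior f.set :=
    strictConvex_closedBall ℝ _ _ hx hy hxy (by norm_num) (by norm_num) (by norm_num)
  exact disjoint_left.1 (hP d hd e he hne) (mem_interior hxd hyd) (mem_interior hxe hye)

lemma IsPacking.countable (hP : IsPacking P) : P.Countable :=
  PairwiseDisjoint.countable_of_isOpen (s := fun d => interior d.set)
    (fun d hd e he hne => hP d hd e he hne) (fun _ _ => isOpen_interior) fun d _ =>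
      ⟨d.center, d.interior_set ▸ mem_ball_self d.radius_pos⟩

open MeasureTheory in
/-- Each disk that meets a given ball contains a ball of radius `ρ` near it, so comparing areas
bounds the number of such disks. -/
lemma IsPacking.locallyFinite (hP : IsPacking P) {ρ : ℝ} (hρ : 0 < ρ)
    (h : ∀ d ∈ P, ρ ≤ d.radius) : LocallyFinite fun d : P => (d : Disk).set := by
  intro x
  let B : P → Set Plane := fun d => interior (d : Disk).set ∩ ball x (2 * ρ + 1)
  have hfin : {d : P | volume (ball (0 : Plane) ρ) ≤ volume (B d)}.Finite := by
    refine Measure.finite_const_le_meas_of_disjoint_iUnion volume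
      (measure_ball_pos _ _ hρ) (fun d => isOpen_interior.measurableSet.inter measurableSet_ball)
      (fun d e hne => ?_) ?_
    · exact (hP d d.2 e e.2 (Subtype.coe_ne_coe.2 hne)).mono inter_subset_left inter_subset_left
    · exact measure_ne_top_of_subset (iUnion_subset fun d => inter_subset_right)
        measure_ball_lt_top.ne
  refine ⟨ball x 1, ball_mem_nhds x one_pos, hfin.subset fun d ⟨y, hyd, hyx⟩ => ?_⟩
  obtain ⟨z, hzy, hz⟩ := Disk.exists_ball_subset_interior hyd hρ.le (h d d.2)
  have hzx : ball z ρ ⊆ ball x (2 * ρ + 1) := ball_subset_ball' <| by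
    linarith [dist_triangle z y x, mem_ball.1 hyx]
  calc volume (ball (0 : Plane) ρ) = volume (ball z ρ) := (Measure.addHaar_ball_center _ _ _).symm
    _ ≤ volume (B d) := measure_mono (subset_inter hz hzx)

lemma isClosed_packingUnion (h : LocallyFinite fun d : P => (d : Disk).set) :
    IsClosed (packingUnion P) := by
  rw [packingUnion, biUnion_eq_iUnion]
  exact h.isClosed_iUnion fun d => d.1.isClosed_set

end Packing

section Power

open EuclideanGeometry

/-- The boundary circle of a disk, giving access to the power of a point. -/
noncomputable def Disk.sphere (d : Disk) : Sphere Plane := ⟨d.center, d.radius⟩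

/-- The power of a point with respect to the boundary circle of a disk. -/
noncomputable def Disk.power (d : Disk) (x : Plane) : ℝ := d.sphere.power x

lemma Disk.power_eq (d : Disk) (x : Plane) : d.power x = ‖x - d.center‖ ^ 2 - d.radius ^ 2 := by
  rw [← dist_eq_norm]; rfl

lemma Disk.power_pos_iff {d : Disk} {x : Plane} : 0 < d.power x ↔ x ∉ d.set := by
  rw [Disk.power, Sphere.power_pos_iff_radius_lt_dist_center d.radius_pos.le, ← not_le]; rfl

lemma Disk.continuous_power (d : Disk) : Continuous d.power := by
  simp only [funext d.power_eq]
  fun_prop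

lemma Disk.power_add_smul (d : Disk) (x v : Plane) (s : ℝ) :
    d.power (x + s • v) = d.power x + 2 * s * inner ℝ v (x - d.center) + s ^ 2 * ‖v‖ ^ 2 := by
  rw [d.power_eq, d.power_eq, add_sub_right_comm, norm_add_sq_real, norm_smul, inner_smul_right,
    real_inner_comm, mul_pow, Real.norm_eq_abs, sq_abs]
  ring

/-- The difference of the powers with respect to two disks is an affine function, so its sign is
constant along a ray from one of its zeros. -/
lemma Disk.power_le_power_of_mem_ray {d e : Disk} {o v : Plane} (ho : d.power o = e.power o)
    (hv : d.power (o + v) ≤ e.power (o + v)) {s : ℝ} (hs : 0 ≤ s) :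
    d.power (o + s • v) ≤ e.power (o + s • v) := by
  have h1 := d.power_add_smul o v 1
  have h2 := e.power_add_smul o v 1
  rw [one_smul] at h1 h2
  rw [d.power_add_smul, e.power_add_smul]
  nlinarith

end Power

section RadicalCenter

/-- The point of equal power with respect to three mutually tangent disks. It is the incenter of the
triangle of their centers, whose barycentric weights are the lengths of the opposite sides. -/
noncomputable def radicalCenter (d a b : Disk) : Plane :=
  (2 * (d.radius + a.radius + b.radius))⁻¹ • ((a.radius + b.radius) • d.center +
    (b.radius + d.radius) • a.center + (d.radius + a.radius) • b.center)

variable {d a b : Disk}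

lemma radicalCenter_rotate (d a b : Disk) : radicalCenter a b d = radicalCenter d a b := by
  simp only [radicalCenter, add_comm, add_left_comm, add_assoc]

lemma norm_radicalCenter_sub_sq (hda : d.Tangent a) (hdb : d.Tangent b) (hab : a.Tangent b) :
    ‖radicalCenter d a b - d.center‖ ^ 2 =
      d.radius * (d.radius + a.radius) * (d.radius + b.radius) /
        (d.radius + a.radius + b.radius) := by
  obtain ⟨D, r, hr⟩ := d
  obtain ⟨A, s, hs⟩ := a
  obtain ⟨B, t, ht⟩ := b
  simp only [Disk.Tangent, radicalCenter] at *
  have hσ : r + s + t ≠ 0 := by positivity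
  have incenter : (2 * (r + s + t))⁻¹ • ((s + t) • D + (t + r) • A + (r + s) • B) - D =
      (2 * (r + s + t))⁻¹ • ((t + r) • (A - D) + (r + s) • (B - D)) := by
    match_scalars <;> field_simp
    ring
  have hu : ‖A - D‖ = r + s := by rw [← dist_eq_norm, dist_comm, hda]
  have hv : ‖B - D‖ = r + t := by rw [← dist_eq_norm, dist_comm, hdb]
  have inner_eq : 2 * inner ℝ (A - D) (B - D) = (r + s) ^ 2 + (r + t) ^ 2 - (s + t) ^ 2 := by
    rw [← hab, dist_eq_norm, ← sub_sub_sub_cancel_right A B D, norm_sub_sq_real, hu, hv]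
    ring
  rw [incenter, norm_smul, mul_pow, norm_add_sq_real, norm_smul, norm_smul, real_inner_smul_left,
    real_inner_smul_right, hu, hv]
  simp only [mul_pow, Real.norm_eq_abs, sq_abs]
  field_simp
  linear_combination (t + r) * inner_eq

lemma power_radicalCenter (hda : d.Tangent a) (hdb : d.Tangent b) (hab : a.Tangent b) :
    d.power (radicalCenter d a b) =
      d.radius * a.radius * b.radius / (d.radius + a.radius + b.radius) := by
  have := d.radius_pos
  have := a.radius_pos
  have := b.radius_pos
  rw [d.power_eq, norm_radicalCenter_sub_sq hda hdb hab]
  field_simp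
  ring

lemma power_radicalCenter_eq (hda : d.Tangent a) (hdb : d.Tangent b) (hab : a.Tangent b) :
    a.power (radicalCenter d a b) = d.power (radicalCenter d a b) := by
  rw [power_radicalCenter hda hdb hab, ← radicalCenter_rotate,
    power_radicalCenter hab hda.symm hdb.symm]
  ring

lemma power_radicalCenter_pos (hda : d.Tangent a) (hdb : d.Tangent b) (hab : a.Tangent b) :
    0 < d.power (radicalCenter d a b) := by
  rw [power_radicalCenter hda hdb hab]
  exact div_pos (mul_pos (mul_pos d.radius_pos a.radius_pos) b.radius_pos)
    (add_pos (add_pos d.radius_pos a.radius_pos) b.radius_pos)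

lemma arccos_div_norm_radicalCenter_sub (hda : d.Tangent a) (hdb : d.Tangent b)
    (hab : a.Tangent b) :
    arccos (d.radius / ‖radicalCenter d a b - d.center‖) =
      halfAngle d.radius⁻¹ a.radius⁻¹ b.radius⁻¹ := by
  have := d.radius_pos
  have := a.radius_pos
  have := b.radius_pos
  rw [arccos_eq_arcsin (by positivity), halfAngle, div_pow,
    norm_radicalCenter_sub_sq hda hdb hab]
  congr 2
  field_simp
  ring

end RadicalCenter

section Gap

lemma closure_connectedComponentIn_inter_subset {X : Type*} [TopologicalSpace X] {U : Set X}
    {x : X} : closure (connectedComponentIn U x) ∩ U ⊆ connectedComponentIn U x := by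
  by_cases hx : x ∈ U
  · have hsub : connectedComponentIn U x ⊆ closure (connectedComponentIn U x) ∩ U :=
      subset_inter subset_closure (connectedComponentIn_subset U x)
    exact (isPreconnected_connectedComponentIn.subset_closure hsub inter_subset_left)
      |>.subset_connectedComponentIn (hsub (mem_connectedComponentIn hx)) inter_subset_right
  · simp [connectedComponentIn_eq_empty hx]

/-- The set `C` is a gap of the packing `P` between the mutually tangent disks `d`, `a` and `b`, in
this order: a bounded connected component of the complement whose closure meets exactly these
three. -/
structure IsGap (P : Set Disk) (C : Set Plane) (d a b : Disk) : Prop where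
  exists_eq : ∃ x ∈ (packingUnion P)ᶜ, connectedComponentIn (packingUnion P)ᶜ x = C
  isBounded : Bornology.IsBounded C
  tangent_left : d.Tangent a
  tangent_right : d.Tangent b
  tangent_opposite : a.Tangent b
  touching_eq : {e ∈ P | (closure C ∩ e.set).Nonempty} = {d, a, b}

variable {P : Set Disk} {C : Set Plane} {d a b : Disk}

lemma IsCompactPacking.exists_isGap (hP : IsCompactPacking P) {x : Plane}
    (hx : x ∈ (packingUnion P)ᶜ) :
    ∃ d a b, IsGap P (connectedComponentIn (packingUnion P)ᶜ x) d a b := by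
  obtain ⟨hbdd, d, a, b, -, -, -, -, -, -, hda, hdb, hab, htouch⟩ := hP.2 x hx
  exact ⟨d, a, b, ⟨x, hx, rfl⟩, hbdd, hda, hdb, hab, htouch⟩

namespace IsGap

lemma rotate (h : IsGap P C d a b) : IsGap P C a b d where
  __ := h
  tangent_left := h.tangent_opposite
  tangent_right := h.tangent_left.symm
  tangent_opposite := h.tangent_right.symm
  touching_eq := by rw [h.touching_eq, insert_comm, pair_comm d b]

lemma swap (h : IsGap P C d a b) : IsGap P C d b a where
  __ := h
  tangent_left := h.tangent_right
  tangent_right := h.tangent_left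
  tangent_opposite := h.tangent_opposite.symm
  touching_eq := by rw [h.touching_eq, pair_comm]

lemma mem_left (h : IsGap P C d a b) : d ∈ P :=
  (h.touching_eq.ge (mem_insert d {a, b})).1

lemma touches (h : IsGap P C d a b) : (closure C ∩ d.set).Nonempty :=
  (h.touching_eq.ge (mem_insert d {a, b})).2

lemma exists_of_touches (h : IsGap P C d a b) {e : Disk} (he : e ∈ P)
    (hCe : (closure C ∩ e.set).Nonempty) : ∃ a' b', IsGap P C e a' b' := by
  rcases h.touching_eq.le ⟨he, hCe⟩ with rfl | rfl | rfl
  exacts [⟨_, _, h⟩, ⟨_, _, h.rotate⟩, ⟨_, _, h.rotate.rotate⟩]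

lemma eq_or_eq_of_touches (h : IsGap P C d a b) {e : Disk} (he : e ∈ P)
    (hCe : (closure C ∩ e.set).Nonempty) (hne : e ≠ d) : e = a ∨ e = b :=
  (h.touching_eq.le ⟨he, hCe⟩).resolve_left hne

lemma mk_mem_pair {a' b' : Disk} (h : IsGap P C d a b) (h' : IsGap P C d a' b') :
    (a', b') ∈ ({(a, b), (b, a)} : Set (Disk × Disk)) := by
  have hab := h'.tangent_opposite.ne
  rcases h.eq_or_eq_of_touches h'.rotate.mem_left h'.rotate.touches h'.tangent_left.ne.symm
    with rfl | rfl <;>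
  rcases h.eq_or_eq_of_touches h'.swap.rotate.mem_left h'.swap.rotate.touches
    h'.tangent_right.ne.symm with rfl | rfl <;> simp_all

lemma subset_compl (h : IsGap P C d a b) : C ⊆ (packingUnion P)ᶜ := by
  obtain ⟨x, -, rfl⟩ := h.exists_eq
  exact connectedComponentIn_subset _ _

lemma nonempty (h : IsGap P C d a b) : C.Nonempty := by
  obtain ⟨x, hx, rfl⟩ := h.exists_eq
  exact ⟨x, mem_connectedComponentIn hx⟩

lemma notMem_set (h : IsGap P C d a b) {x : Plane} (hx : x ∈ C) {e : Disk} (he : e ∈ P) :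
    x ∉ e.set := fun hxe => h.subset_compl hx (subset_packingUnion he hxe)

lemma connectedComponentIn_eq (h : IsGap P C d a b) {x : Plane} (hx : x ∈ C) :
    connectedComponentIn (packingUnion P)ᶜ x = C := by
  obtain ⟨y, -, rfl⟩ := h.exists_eq
  exact (_root_.connectedComponentIn_eq hx).symm

lemma eq_of_mem {C' : Set Plane} {d' a' b' : Disk} (h : IsGap P C d a b)
    (h' : IsGap P C' d' a' b') {x : Plane} (hx : x ∈ C) (hx' : x ∈ C') : C = C' := by
  rw [← h.connectedComponentIn_eq hx, h'.connectedComponentIn_eq hx']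

lemma isOpen (hU : IsClosed (packingUnion P)) (h : IsGap P C d a b) : IsOpen C := by
  obtain ⟨x, -, rfl⟩ := h.exists_eq
  exact hU.isOpen_compl.connectedComponentIn

/-- The boundary of a gap lies on its three disks. -/
lemma subset_of_isPreconnected (hU : IsClosed (packingUnion P)) (h : IsGap P C d a b)
    {S : Set Plane} (hS : IsPreconnected S) (hSC : (S ∩ C).Nonempty)
    (hdis : ∀ x ∈ S, x ∉ d.set ∧ x ∉ a.set ∧ x ∉ b.set) : S ⊆ C := by
  refine hS.subset_of_closure_inter_subset (h.isOpen hU) hSC fun y ⟨hyC, hyS⟩ => ?_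
  have hy : y ∈ (packingUnion P)ᶜ := fun hyP => by
    obtain ⟨e, he, hye⟩ := mem_packingUnion.1 hyP
    obtain ⟨hd, ha, hb⟩ := hdis y hyS
    rcases h.touching_eq.le ⟨he, y, hyC, hye⟩ with rfl | rfl | rfl <;> contradiction
  obtain ⟨x, -, rfl⟩ := h.exists_eq
  exact closure_connectedComponentIn_inter_subset ⟨hyC, hy⟩

end IsGap

/-- The cell of `d` in the power diagram of the disks `d`, `a` and `b`. -/
def powerCell (d a b : Disk) : Set Plane := {x | d.power x ≤ a.power x ∧ d.power x ≤ b.power x}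

lemma exists_mem_powerCell (d a b : Disk) (x : Plane) :
    x ∈ powerCell d a b ∨ x ∈ powerCell a b d ∨ x ∈ powerCell b d a := by
  simp only [powerCell, mem_ofPred_eq]
  grind

lemma notMem_set_of_mem_powerCell {x : Plane} (hx : x ∈ powerCell d a b) (hd : x ∉ d.set) :
    x ∉ d.set ∧ x ∉ a.set ∧ x ∉ b.set := by
  simp only [← Disk.power_pos_iff] at hd ⊢
  exact ⟨hd, hd.trans_le hx.1, hd.trans_le hx.2⟩

lemma eventually_mem_powerCell {u : Plane} (hu : ‖u‖ = 1)
    (ha : d.center + d.radius • u ∉ a.set) (hb : d.center + d.radius • u ∉ b.set) :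
    ∀ᶠ s in 𝓝[>] d.radius, d.center + s • u ∈ powerCell d a b := by
  have hcont (f : Disk) : Continuous fun s : ℝ => f.power (d.center + s • u) :=
    f.continuous_power.comp (by fun_prop)
  have hd : d.power (d.center + d.radius • u) = 0 := by
    simp [d.power_eq, norm_smul, hu]
  have lt_of_notMem {e : Disk} (he : d.center + d.radius • u ∉ e.set) :
      ∀ᶠ s in 𝓝[>] d.radius, d.power (d.center + s • u) < e.power (d.center + s • u) :=
    eventually_nhdsWithin_of_eventually_nhds <| ((hcont d).tendsto _).eventually_lt
      ((hcont e).tendsto _) (hd.trans_lt (Disk.power_pos_iff.2 he))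
  filter_upwards [lt_of_notMem ha, lt_of_notMem hb] with s hsa hsb
  exact ⟨hsa.le, hsb.le⟩

namespace IsGap

lemma ray_mem_powerCell (h : IsGap P C d a b) {x : Plane} (hx : x ∈ powerCell d a b) {s : ℝ}
    (hs : 0 ≤ s) :
    radicalCenter d a b + s • (x - radicalCenter d a b) ∈ powerCell d a b := by
  have ho := power_radicalCenter_eq h.tangent_left h.tangent_right h.tangent_opposite
  have ho' := power_radicalCenter_eq h.rotate.tangent_left h.rotate.tangent_right
    h.rotate.tangent_opposite
  rw [radicalCenter_rotate] at ho'
  exact ⟨Disk.power_le_power_of_mem_ray ho.symm (by simpa using hx.1) hs,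
    Disk.power_le_power_of_mem_ray (ho'.trans ho).symm (by simpa using hx.2) hs⟩

lemma ray_mem (hU : IsClosed (packingUnion P)) (h : IsGap P C d a b) {x : Plane}
    (hx : x ∈ powerCell d a b) {I : Set ℝ} (hI : I.OrdConnected) (hI0 : I ⊆ Ici 0)
    (hd : ∀ s ∈ I, radicalCenter d a b + s • (x - radicalCenter d a b) ∉ d.set) {s t : ℝ}
    (hs : s ∈ I) (ht : t ∈ I)
    (hsC : radicalCenter d a b + s • (x - radicalCenter d a b) ∈ C) :
    radicalCenter d a b + t • (x - radicalCenter d a b) ∈ C := by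
  refine h.subset_of_isPreconnected hU
    (S := (fun s : ℝ => radicalCenter d a b + s • (x - radicalCenter d a b)) '' I)
    (hI.isPreconnected.image _ (by fun_prop)) ⟨_, mem_image_of_mem _ hs, hsC⟩ ?_
    (mem_image_of_mem _ ht)
  rintro - ⟨u, hu, rfl⟩
  exact notMem_set_of_mem_powerCell (h.ray_mem_powerCell hx (hI0 hu)) (hd u hu)

lemma exists_ray_mem_set (hU : IsClosed (packingUnion P)) (h : IsGap P C d a b) {x : Plane}
    (hx : x ∈ powerCell d a b) (hxC : x ∈ C) (hxo : x ≠ radicalCenter d a b) :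
    ∃ s ≥ (1 : ℝ), radicalCenter d a b + s • (x - radicalCenter d a b) ∈ d.set := by
  by_contra! hd
  have hray : ∀ t ≥ (1 : ℝ), radicalCenter d a b + t • (x - radicalCenter d a b) ∈ C :=
    fun t ht => h.ray_mem hU hx ordConnected_Ici (Ici_subset_Ici.2 zero_le_one) hd
      self_mem_Ici ht (by simpa using hxC)
  obtain ⟨R, hR⟩ := h.isBounded.subset_closedBall (radicalCenter d a b)
  obtain ⟨t, ht, htR⟩ := ((eventually_ge_atTop 1).and ((tendsto_id.atTop_mul_const
    (norm_pos_iff.2 (sub_ne_zero.2 hxo))).eventually_gt_atTop R)).exists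
  have hle := mem_closedBall_iff_norm.1 (hR (hray t ht))
  rw [add_sub_cancel_left, norm_smul, Real.norm_of_nonneg (zero_le_one.trans ht)] at hle
  exact hle.not_gt htR

/-- Connect a point of the gap to the radical center by a segment in its cell of the power diagram:
it avoids the disk of this cell, which the opposite ray hits. -/
lemma radicalCenter_mem (hU : IsClosed (packingUnion P)) (h : IsGap P C d a b) :
    radicalCenter d a b ∈ C := by
  obtain ⟨x, hxC⟩ := h.nonempty
  wlog hx : x ∈ powerCell d a b generalizing d a b
  · rcases exists_mem_powerCell d a b x with hx' | hx' | hx'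
    · exact absurd hx' hx
    · exact radicalCenter_rotate d a b ▸ this h.rotate hx'
    · exact radicalCenter_rotate b d a ▸ this h.rotate.rotate hx'
  rcases eq_or_ne x (radicalCenter d a b) with rfl | hxo
  · exact hxC
  obtain ⟨t, ht, htd⟩ := h.exists_ray_mem_set hU hx hxC hxo
  have hseg : ∀ s ∈ Icc (0 : ℝ) 1,
      radicalCenter d a b + s • (x - radicalCenter d a b) ∉ d.set := fun s hs hsd => by
    have hline : {s : ℝ | radicalCenter d a b + s • (x - radicalCenter d a b) ∈ d.set} =
        AffineMap.lineMap (k := ℝ) (radicalCenter d a b) x ⁻¹' closedBall d.center d.radius := by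
      ext s
      simp [Disk.set, AffineMap.lineMap_apply, add_comm]
    have hconv := hline ▸ ((convex_closedBall d.center d.radius).affine_preimage _).ordConnected
    have := hconv.out hsd htd ⟨hs.2, ht⟩
    exact h.notMem_set hxC h.mem_left (by simpa using this)
  simpa using h.ray_mem hU hx ordConnected_Icc Icc_subset_Ici_self hseg
    (right_mem_Icc.2 zero_le_one) (left_mem_Icc.2 zero_le_one) (by simpa using hxC)

lemma mem_iff (hU : IsClosed (packingUnion P)) (h : IsGap P C d a b) {x : Plane}
    (hx : x ∈ powerCell d a b) (hxd : x ∉ d.set) :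
    x ∈ C ↔ inner ℝ (x - radicalCenter d a b) (x - d.center) ≤ 0 := by
  have power_ray (s : ℝ) : d.power (radicalCenter d a b + s • (x - radicalCenter d a b)) =
      d.power x + 2 * (s - 1) * inner ℝ (x - radicalCenter d a b) (x - d.center) +
        (s - 1) ^ 2 * ‖x - radicalCenter d a b‖ ^ 2 := by
    rw [← d.power_add_smul]
    congr 1
    module
  rw [← Disk.power_pos_iff] at hxd
  constructor
  · intro hxC
    by_contra! hpos
    obtain ⟨s, hs, hsd⟩ := h.exists_ray_mem_set hU hx hxC (by rintro rfl; simp at hpos)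
    refine Disk.power_pos_iff.1 ?_ hsd
    rw [power_ray, mul_assoc 2]
    have := mul_nonneg (sub_nonneg.2 hs) hpos.le
    positivity
  · intro hle
    have hseg : ∀ s ∈ Icc (0 : ℝ) 1,
        radicalCenter d a b + s • (x - radicalCenter d a b) ∉ d.set := fun s hs => by
      rw [← Disk.power_pos_iff, power_ray]
      have := mul_nonneg_of_nonpos_of_nonpos (sub_nonpos.2 hs.2) hle
      rw [mul_assoc]
      positivity
    simpa using h.ray_mem hU hx ordConnected_Icc Icc_subset_Ici_self hseg
      (left_mem_Icc.2 zero_le_one) (right_mem_Icc.2 zero_le_one)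
      (by simpa using h.radicalCenter_mem hU)

lemma eventually_mem_iff (hU : IsClosed (packingUnion P)) (h : IsGap P C d a b) {u : Plane}
    (hu : ‖u‖ = 1) (ha : d.center + d.radius • u ∉ a.set)
    (hb : d.center + d.radius • u ∉ b.set) :
    ∀ᶠ s in 𝓝[>] d.radius, d.center + s • u ∈ C ↔
      d.radius < inner ℝ (radicalCenter d a b - d.center) u := by
  have hle : ∀ᶠ s in 𝓝[>] d.radius, s ≤ inner ℝ (radicalCenter d a b - d.center) u ↔
      d.radius < inner ℝ (radicalCenter d a b - d.center) u := by
    rcases lt_or_ge d.radius (inner ℝ (radicalCenter d a b - d.center) u) with hlt | hge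
    · filter_upwards [Ioo_mem_nhdsGT hlt] with s hs
      exact iff_of_true hs.2.le hlt
    · filter_upwards [self_mem_nhdsWithin] with s (hs : d.radius < s)
      exact iff_of_false (hge.trans_lt hs).not_ge hge.not_gt
  filter_upwards [eventually_mem_powerCell hu ha hb, hle, self_mem_nhdsWithin]
    with s hs hsle (hsr : d.radius < s)
  have hs0 : 0 < s := d.radius_pos.trans hsr
  have hsd : d.center + s • u ∉ d.set := (Disk.add_smul_mem_set_iff hu hs0.le).not.2 hsr.not_ge
  have hinner : inner ℝ (d.center + s • u - radicalCenter d a b) (s • u) =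
      s * (s - inner ℝ (radicalCenter d a b - d.center) u) := by
    rw [show d.center + s • u - radicalCenter d a b = s • u - (radicalCenter d a b - d.center) by
      abel, real_inner_smul_right, inner_sub_left, real_inner_smul_left, real_inner_self_eq_norm_sq,
      hu]
    ring
  rw [h.mem_iff hU hs hsd, add_sub_cancel_left, hinner,
    ← not_lt, mul_pos_iff_of_pos_left hs0, not_lt, sub_nonpos, hsle]

end IsGap

end Gap

section Connectivity

variable {P : Set Disk} {d e : Disk} {x : Plane}

/-- The points of the plane that lie on two distinct disks of a family. -/
def contactSet (P : Set Disk) : Set Plane := ⋃ d ∈ P, ⋃ e ∈ P \ {d}, d.set ∩ e.set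

lemma mem_contactSet (hd : d ∈ P) (he : e ∈ P) (hne : e ≠ d) (hxd : x ∈ d.set) (hxe : x ∈ e.set) :
    x ∈ contactSet P :=
  mem_biUnion hd (mem_biUnion (x := e) ⟨he, hne⟩ ⟨hxd, hxe⟩)

lemma IsPacking.countable_contactSet (hP : IsPacking P) : (contactSet P).Countable :=
  hP.countable.biUnion fun _ hd => (hP.countable.mono sdiff_subset).biUnion fun _ he =>
    (hP.subsingleton_inter hd he.1 fun h => he.2 h.symm).countable

lemma notMem_packingUnion_sdiff (hd : d ∈ P) (hxd : x ∈ d.set) (hx : x ∉ contactSet P) :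
    x ∉ packingUnion (P \ {d}) := fun h => by
  obtain ⟨e, he, hxe⟩ := mem_packingUnion.1 h
  exact hx (mem_contactSet hd he.1 he.2 hxd hxe)

lemma notMem_packingUnion (hx : x ∉ d.set) (hx' : x ∉ packingUnion (P \ {d})) :
    x ∉ packingUnion P := fun h => by
  obtain ⟨e, he, hxe⟩ := mem_packingUnion.1 h
  refine hx' (mem_packingUnion.2 ⟨e, ⟨he, ?_⟩, hxe⟩)
  rintro rfl
  exact hx hxe

lemma isClosed_packingUnion_sdiff (h : LocallyFinite fun d : P => (d : Disk).set) (d : Disk) :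
    IsClosed (packingUnion (P \ {d})) :=
  isClosed_packingUnion (h.comp_injective (g := inclusion sdiff_subset) (inclusion_injective _))

/-- Whoever leaves a gap towards `d`, avoiding all other disks, crosses the boundary of the gap at a
point of `d`. -/
lemma closure_connectedComponentIn_inter_nonempty (hU : IsClosed (packingUnion P)) (hd : d ∈ P)
    {S : Set Plane} (hS : IsPreconnected S) (hdis : Disjoint S (packingUnion (P \ {d})))
    (hdS : (S ∩ d.set).Nonempty) (hx : x ∈ (packingUnion P)ᶜ) (hxS : x ∈ S) :
    (closure (connectedComponentIn (packingUnion P)ᶜ x) ∩ d.set).Nonempty := by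
  by_contra hempty
  have hsub : S ⊆ connectedComponentIn (packingUnion P)ᶜ x :=
    hS.subset_of_closure_inter_subset hU.isOpen_compl.connectedComponentIn
      ⟨x, hxS, mem_connectedComponentIn hx⟩ fun y ⟨hyC, hyS⟩ =>
        closure_connectedComponentIn_inter_subset
          ⟨hyC, notMem_packingUnion (fun hyd => hempty ⟨y, hyC, hyd⟩) (disjoint_left.1 hdis hyS)⟩
  obtain ⟨y, hyS, hyd⟩ := hdS
  exact connectedComponentIn_subset _ _ (hsub hyS) (subset_packingUnion hd hyd)

/-- The disk `d` together with the components of the complement of the packing that touch it. -/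
def territory (P : Set Disk) (d : Disk) : Set Plane :=
  d.set ∪ {x | (closure (connectedComponentIn (packingUnion P)ᶜ x) ∩ d.set).Nonempty}

lemma territory_mem_nhds_of_mem_set (h : LocallyFinite fun d : P => (d : Disk).set) (hd : d ∈ P)
    (hxd : x ∈ d.set) (hx : x ∉ contactSet P) : territory P d ∈ 𝓝 x := by
  obtain ⟨ε, hε, hball⟩ := Metric.isOpen_iff.1 (isClosed_packingUnion_sdiff h d).isOpen_compl x
    (notMem_packingUnion_sdiff hd hxd hx)
  filter_upwards [ball_mem_nhds x hε] with y hy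
  refine or_iff_not_imp_left.2 fun hyd => ?_
  exact closure_connectedComponentIn_inter_nonempty (isClosed_packingUnion h) hd
    (convex_ball x ε).isPreconnected (disjoint_left.2 hball) ⟨x, mem_ball_self hε, hxd⟩
    (notMem_packingUnion hyd (hball hy)) hy

lemma territory_mem_nhds_of_touches (hU : IsClosed (packingUnion P))
    (hx : x ∈ (packingUnion P)ᶜ)
    (hxd : (closure (connectedComponentIn (packingUnion P)ᶜ x) ∩ d.set).Nonempty) :
    territory P d ∈ 𝓝 x := by
  filter_upwards [hU.isOpen_compl.connectedComponentIn.mem_nhds (mem_connectedComponentIn hx)]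
    with y hy
  rw [connectedComponentIn_eq hy] at hxd
  exact .inr hxd

lemma IsCompactPacking.exists_territory_mem_nhds (hP : IsCompactPacking P)
    (h : LocallyFinite fun d : P => (d : Disk).set) (hx : x ∉ contactSet P) :
    ∃ d ∈ P, territory P d ∈ 𝓝 x := by
  by_cases hxU : x ∈ packingUnion P
  · obtain ⟨d, hd, hxd⟩ := mem_packingUnion.1 hxU
    exact ⟨d, hd, territory_mem_nhds_of_mem_set h hd hxd hx⟩
  · obtain ⟨d, a, b, hgap⟩ := hP.exists_isGap hxU
    exact ⟨d, hgap.mem_left,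
      territory_mem_nhds_of_touches (isClosed_packingUnion h) hxU hgap.touches⟩

lemma IsCompactPacking.exists_isGap_of_mem_territory (hP : IsCompactPacking P) (hd : d ∈ P)
    (he : e ∈ P) (hne : e ≠ d) (hx : x ∉ contactSet P) (hxd : x ∈ territory P d)
    (hxe : x ∈ territory P e) : ∃ C b, IsGap P C d e b := by
  by_cases hxU : x ∈ packingUnion P
  · have mem_set {f : Disk} (hxf : x ∈ territory P f) : x ∈ f.set := by
      simpa [territory, connectedComponentIn_eq_empty (notMem_compl_iff.2 hxU)] using hxf
    exact absurd (mem_contactSet hd he hne (mem_set hxd) (mem_set hxe)) hx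
  · replace hxd := hxd.resolve_left fun h => hxU (subset_packingUnion hd h)
    replace hxe := hxe.resolve_left fun h => hxU (subset_packingUnion he h)
    obtain ⟨_, _, _, hgap⟩ := hP.exists_isGap hxU
    obtain ⟨a, b, hgap⟩ := hgap.exists_of_touches hd hxd
    rcases hgap.eq_or_eq_of_touches he hxe hne with rfl | rfl
    exacts [⟨_, _, hgap⟩, ⟨_, _, hgap.swap⟩]

/-- Removing the countably many contact points leaves the plane connected, so it cannot be split
into the territories of a class of disks and those of the remaining disks. -/
lemma IsCompactPacking.eq_of_isGap_closed (hP : IsCompactPacking P)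
    (h : LocallyFinite fun d : P => (d : Disk).set) {Q : Set Disk} (hQP : Q ⊆ P)
    (hQ : Q.Nonempty) (hclosed : ∀ d ∈ Q, ∀ C a b, IsGap P C d a b → a ∈ Q) : Q = P := by
  by_contra hne
  obtain ⟨f, hfP, hfQ⟩ := exists_of_ssubset (hQP.ssubset_of_ne hne)
  have hrank : 1 < Module.rank ℝ Plane := by
    rw [rank_eq_card_basis (EuclideanSpace.basisFun (Fin 2) ℝ).toBasis]
    norm_num
  let V (R : Set Disk) : Set Plane := interior (⋃ d ∈ R, territory P d)
  have hV {R : Set Disk} {d : Disk} (hd : d ∈ R) : interior (territory P d) ⊆ V R :=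
    interior_mono (subset_biUnion_of_mem hd)
  have hcover : (contactSet P)ᶜ ⊆ V Q ∪ V (P \ Q) := fun x hx => by
    obtain ⟨d, hd, hxd⟩ := hP.exists_territory_mem_nhds h hx
    by_cases hdQ : d ∈ Q
    exacts [.inl (hV hdQ (mem_interior_iff_mem_nhds.2 hxd)),
      .inr (hV (R := P \ Q) ⟨hd, hdQ⟩ (mem_interior_iff_mem_nhds.2 hxd))]
  have hmeet {R : Set Disk} {d : Disk} (hd : d ∈ R) : ((contactSet P)ᶜ ∩ V R).Nonempty := by
    have hcenter : d.center ∈ V R := hV hd <| interior_mono subset_union_left <|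
      d.interior_set ▸ mem_ball_self d.radius_pos
    rw [inter_comm]
    exact (hP.1.countable_contactSet.dense_compl ℝ).inter_open_nonempty _ isOpen_interior
      ⟨_, hcenter⟩
  obtain ⟨x, hx, hxQ, hxQc⟩ := (hP.1.countable_contactSet.isConnected_compl_of_one_lt_rank
    hrank).isPreconnected _ _ isOpen_interior isOpen_interior hcover (hmeet hQ.some_mem)
    (hmeet ⟨hfP, hfQ⟩)
  obtain ⟨d, hd, hxd⟩ := mem_iUnion₂.1 (interior_subset hxQ)
  obtain ⟨e, ⟨heP, heQ⟩, hxe⟩ := mem_iUnion₂.1 (interior_subset hxQc)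
  obtain ⟨C, b, hgap⟩ := hP.exists_isGap_of_mem_territory (hQP hd) heP
    (fun heq => heQ (heq ▸ hd)) hx hxd hxe
  exact heQ (hclosed d hd C e b hgap)

lemma IsCompactPacking.exists_isGap_eventually_mem {P : Set Disk} {d : Disk} {u : Plane}
    (hP : IsCompactPacking P) (h : LocallyFinite fun d : P => (d : Disk).set) (hd : d ∈ P)
    (hu : ‖u‖ = 1) (hdu : d.center + d.radius • u ∉ packingUnion (P \ {d})) :
    ∃ C a b, IsGap P C d a b ∧ ∀ᶠ s in 𝓝[>] d.radius, d.center + s • u ∈ C := by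
  have hnhds : ∀ᶠ s in 𝓝 d.radius, d.center + s • u ∉ packingUnion (P \ {d}) :=
    Continuous.tendsto (by fun_prop : Continuous fun s : ℝ => d.center + s • u) _
      |>.eventually ((isClosed_packingUnion_sdiff h d).isOpen_compl.mem_nhds hdu)
  obtain ⟨t, ht, hIco⟩ := (mem_nhdsGE_iff_exists_Ico_subset).1
    (mem_nhdsWithin_of_mem_nhds hnhds)
  have hcompl : ∀ s ∈ Ioo d.radius t, d.center + s • u ∈ (packingUnion P)ᶜ := fun s hs =>
    notMem_packingUnion ((Disk.add_smul_mem_set_iff hu (d.radius_pos.trans hs.1).le).not.2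
      hs.1.not_ge) (hIco ⟨hs.1.le, hs.2⟩)
  obtain ⟨s, hs⟩ := nonempty_Ioo.2 (mem_Ioi.1 ht)
  have htouch := closure_connectedComponentIn_inter_nonempty (isClosed_packingUnion h) hd
    (S := (fun s : ℝ => d.center + s • u) '' Ico d.radius t)
    (isPreconnected_Ico.image _ (by fun_prop))
    (by rw [disjoint_left]; rintro - ⟨s, hs, rfl⟩; exact hIco hs)
    ⟨_, mem_image_of_mem _ (left_mem_Ico.2 ht),
      (Disk.add_smul_mem_set_iff hu d.radius_pos.le).2 le_rfl⟩
    (hcompl s hs) (mem_image_of_mem _ (Ioo_subset_Ico_self hs))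
  obtain ⟨_, _, _, hgap⟩ := hP.exists_isGap (hcompl s hs)
  obtain ⟨a, b, hgap⟩ := hgap.exists_of_touches hd htouch
  refine ⟨_, a, b, hgap, mem_of_superset (Ioo_mem_nhdsGT ht) fun s' hs' => ?_⟩
  have hsub : (fun s : ℝ => d.center + s • u) '' Ioo d.radius t ⊆ (packingUnion P)ᶜ :=
    image_subset_iff.2 hcompl
  exact (isPreconnected_Ioo.image (fun s : ℝ => d.center + s • u) (by fun_prop))
    |>.subset_connectedComponentIn (mem_image_of_mem _ hs) hsub
      (mem_image_of_mem _ hs')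

end Connectivity

section Circle

open MeasureTheory

instance fact_two_pi_pos : Fact (0 < 2 * π) := ⟨two_pi_pos⟩

/-- The unit vector of the plane with a given polar angle. -/
noncomputable def direction (t : AddCircle (2 * π)) : Plane := !₂[Angle.cos t, Angle.sin t]

lemma inner_direction_coe (x y : ℝ) :
    inner ℝ (direction (x : AddCircle (2 * π))) (direction (y : AddCircle (2 * π))) =
      cos (x - y) := by
  have direction_coe (z : ℝ) : direction (z : AddCircle (2 * π)) = !₂[cos z, sin z] := rfl
  rw [direction_coe, direction_coe, cos_sub]
  simp [PiLp.inner_apply, Fin.sum_univ_two, mul_comm]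

lemma cos_norm_addCircle (x : ℝ) : cos ‖(x : AddCircle (2 * π))‖ = cos x := by
  rw [AddCircle.norm_eq, cos_abs, cos_sub_int_mul_two_pi]

lemma inner_direction (s t : AddCircle (2 * π)) :
    inner ℝ (direction s) (direction t) = cos (dist s t) := by
  induction s using QuotientAddGroup.induction_on with | H x
  induction t using QuotientAddGroup.induction_on with | H y
  rw [dist_eq_norm]
  exact (inner_direction_coe x y).trans (cos_norm_addCircle (x - y)).symm

lemma norm_direction (t : AddCircle (2 * π)) : ‖direction t‖ = 1 := by
  rw [norm_eq_sqrt_real_inner, inner_direction, dist_self, cos_zero, sqrt_one]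

lemma dist_mem_Icc_zero_pi (s t : AddCircle (2 * π)) : dist s t ∈ Icc 0 π := by
  refine ⟨dist_nonneg, ?_⟩
  rw [dist_eq_norm]
  simpa [abs_of_pos pi_pos] using AddCircle.norm_le_half_period (2 * π) two_pi_pos.ne' (x := s - t)

lemma direction_injective : Function.Injective direction := fun s t h => by
  have : cos (dist s t) = cos 0 := by
    rw [← inner_direction, ← h, inner_direction, dist_self]
  exact dist_eq_zero.1 (injOn_cos (dist_mem_Icc_zero_pi s t) ⟨le_rfl, pi_pos.le⟩ this)

lemma exists_norm_smul_direction_eq (w : Plane) : ∃ t, ‖w‖ • direction t = w := by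
  refine ⟨(Complex.arg ⟨w 0, w 1⟩ : ℝ), ?_⟩
  have hw : ‖w‖ = ‖(⟨w 0, w 1⟩ : ℂ)‖ := by
    simp [EuclideanSpace.norm_eq, Complex.norm_def, Complex.normSq_mk, sq]
  rw [hw]
  ext i
  fin_cases i
  · exact Complex.norm_mul_cos_arg _
  · exact Complex.norm_mul_sin_arg _

instance nullSingletonClass_addCircle :
    NullSingletonClass (volume : Measure (AddCircle (2 * π))) where
  measure_singleton x := by
    rw [← closedBall_zero, AddCircle.volume_closedBall, mul_zero, min_eq_right two_pi_pos.le,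
      ENNReal.ofReal_zero]

lemma exists_setOf_lt_inner_direction_eq_ball {w : Plane} {r : ℝ} (hw : w ≠ 0) (hr : |r| ≤ ‖w‖) :
    ∃ s, {t | r < inner ℝ w (direction t)} = ball s (arccos (r / ‖w‖)) := by
  have hw' : 0 < ‖w‖ := norm_pos_iff.2 hw
  obtain ⟨s, hs⟩ := exists_norm_smul_direction_eq w
  refine ⟨s, ext fun t => ?_⟩
  have hquot : r / ‖w‖ ∈ Icc (-1) 1 := by
    rw [mem_Icc, ← abs_le, abs_div, abs_norm]
    exact div_le_one_of_le₀ hr hw'.le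
  have hdist := dist_mem_Icc_zero_pi t s
  have hinner : inner ℝ w (direction t) = ‖w‖ * cos (dist t s) := by
    nth_rw 1 [← hs]
    rw [real_inner_smul_left, inner_direction, dist_comm]
  rw [mem_ofPred_eq, mem_ball, hinner, ← div_lt_iff₀' hw', ← arccos_cos hdist.1 hdist.2,
    strictAntiOn_arccos.lt_iff_gt (cos_mem_Icc _) hquot, arccos_cos hdist.1 hdist.2]

lemma measurableSet_lt_inner_direction {w : Plane} {r : ℝ} (hw : w ≠ 0) (hr : |r| ≤ ‖w‖) :
    MeasurableSet {t | r < inner ℝ w (direction t)} := by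
  obtain ⟨s, hs⟩ := exists_setOf_lt_inner_direction_eq_ball hw hr
  exact hs ▸ measurableSet_ball

lemma volume_lt_inner_direction {w : Plane} {r : ℝ} (hw : w ≠ 0) (hr : |r| ≤ ‖w‖) :
    volume {t | r < inner ℝ w (direction t)} = ENNReal.ofReal (2 * arccos (r / ‖w‖)) := by
  obtain ⟨s, hs⟩ := exists_setOf_lt_inner_direction_eq_ball hw hr
  rw [hs, ← measure_congr AddCircle.closedBall_ae_eq_ball, AddCircle.volume_closedBall,
    min_eq_right (by gcongr; exact arccos_le_pi _)]

end Circle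

section AngleSum

open MeasureTheory

variable {P : Set Disk} {d : Disk}

/-- The ordered pairs of disks that form a gap of the packing `P` together with `d`. -/
def corona (P : Set Disk) (d : Disk) : Set (Disk × Disk) := {p | ∃ C, IsGap P C d p.1 p.2}

lemma finite_corona (h : LocallyFinite fun d : P => (d : Disk).set) (d : Disk) :
    (corona P d).Finite := by
  have hfin := (h.finite_nonempty_inter_compact (isCompact_closedBall d.center d.radius)).image
    Subtype.val
  have mem_image {e : Disk} (he : e ∈ P) (hde : d.Tangent e) :
      e ∈ Subtype.val '' {e : P | ((e : Disk).set ∩ d.set).Nonempty} :=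
    ⟨⟨e, he⟩, hde.symm.nonempty_inter, rfl⟩
  exact (hfin.prod hfin).subset fun p ⟨C, hC⟩ =>
    ⟨mem_image hC.rotate.mem_left hC.tangent_left,
      mem_image hC.swap.rotate.mem_left hC.tangent_right⟩

/-- The directions in which one leaves `d` towards its gap with `p.1` and `p.2`: the
directions whose angle with that of the radical center has cosine larger than the quotient of the
radius and the distance to the radical center. -/
def gapArc (d : Disk) (p : Disk × Disk) : Set (AddCircle (2 * π)) :=
  {t | d.radius < inner ℝ (radicalCenter d p.1 p.2 - d.center) (direction t)}

lemma radius_lt_norm_radicalCenter_sub {p : Disk × Disk} (hp : p ∈ corona P d) :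
    d.radius < ‖radicalCenter d p.1 p.2 - d.center‖ := by
  obtain ⟨C, hC⟩ := hp
  have := power_radicalCenter_pos hC.tangent_left hC.tangent_right hC.tangent_opposite
  rw [d.power_eq, sub_pos] at this
  exact lt_of_pow_lt_pow_left₀ 2 (norm_nonneg _) this

lemma measurableSet_gapArc {p : Disk × Disk} (hp : p ∈ corona P d) :
    MeasurableSet (gapArc d p) := by
  have hlt := radius_lt_norm_radicalCenter_sub hp
  exact measurableSet_lt_inner_direction (norm_pos_iff.1 (d.radius_pos.trans hlt))
    ((abs_of_pos d.radius_pos).trans_le hlt.le)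

lemma volume_gapArc {p : Disk × Disk} (hp : p ∈ corona P d) :
    volume (gapArc d p) =
      ENNReal.ofReal (2 * halfAngle d.radius⁻¹ p.1.radius⁻¹ p.2.radius⁻¹) := by
  have hlt := radius_lt_norm_radicalCenter_sub hp
  obtain ⟨C, hC⟩ := hp
  rw [gapArc, volume_lt_inner_direction (norm_pos_iff.1 (d.radius_pos.trans hlt))
    ((abs_of_pos d.radius_pos).trans_le hlt.le),
    arccos_div_norm_radicalCenter_sub hC.tangent_left hC.tangent_right hC.tangent_opposite]

lemma IsPacking.ae_notMem_contactSet (hP : IsPacking P) (d : Disk) :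
    ∀ᵐ t : AddCircle (2 * π), d.center + d.radius • direction t ∉ contactSet P := by
  have hinj : Function.Injective fun t => d.center + d.radius • direction t :=
    (add_right_injective _).comp <|
      (smul_right_injective _ d.radius_pos.ne').comp direction_injective
  exact (hP.countable_contactSet.preimage hinj).ae_notMem _

lemma IsCompactPacking.exists_corona_inter_gapArc_eq (hP : IsCompactPacking P)
    (h : LocallyFinite fun d : P => (d : Disk).set) (hd : d ∈ P) {t : AddCircle (2 * π)}
    (ht : d.center + d.radius • direction t ∉ contactSet P) :
    ∃ a b, a ≠ b ∧ {p ∈ corona P d | t ∈ gapArc d p} = {(a, b), (b, a)} := by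
  have hU := isClosed_packingUnion h
  have htd : d.center + d.radius • direction t ∈ d.set :=
    (Disk.add_smul_mem_set_iff (norm_direction t) d.radius_pos.le).2 le_rfl
  have mem_gapArc_iff {C : Set Plane} {a b : Disk} (hC : IsGap P C d a b) :
      t ∈ gapArc d (a, b) ↔ ∀ᶠ s in 𝓝[>] d.radius, d.center + s • direction t ∈ C := by
    have notMem {e : Disk} (he : e ∈ P) (hde : d.Tangent e) :
        d.center + d.radius • direction t ∉ e.set :=
      fun hte => ht (mem_contactSet hd he hde.ne.symm htd hte)
    rw [eventually_congr (hC.eventually_mem_iff hU (norm_direction t)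
      (notMem hC.rotate.mem_left hC.tangent_left)
      (notMem hC.swap.rotate.mem_left hC.tangent_right)), eventually_const]
    rfl
  obtain ⟨C, a, b, hC, hCt⟩ := hP.exists_isGap_eventually_mem h hd (norm_direction t)
    (notMem_packingUnion_sdiff hd htd ht)
  refine ⟨a, b, hC.tangent_opposite.ne, subset_antisymm ?_ ?_⟩
  · rintro ⟨a', b'⟩ ⟨⟨C', hC'⟩, htC'⟩
    obtain ⟨s, hs, hs'⟩ := (hCt.and ((mem_gapArc_iff hC').1 htC')).exists
    obtain rfl := hC.eq_of_mem hC' hs hs'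
    exact hC.mk_mem_pair hC'
  · rintro _ (rfl | rfl)
    · exact ⟨⟨C, hC⟩, (mem_gapArc_iff hC).2 hCt⟩
    · exact ⟨⟨C, hC.swap⟩, (mem_gapArc_iff hC.swap).2 hCt⟩

lemma IsCompactPacking.sum_volume_gapArc (hP : IsCompactPacking P)
    (h : LocallyFinite fun d : P => (d : Disk).set) (hd : d ∈ P) :
    ∑ p ∈ (finite_corona h d).toFinset, volume (gapArc d p) = 2 * ENNReal.ofReal (2 * π) := by
  classical
  set E := (finite_corona h d).toFinset with hE
  have hmeas : ∀ p ∈ E, MeasurableSet (gapArc d p) := fun p hp =>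
    measurableSet_gapArc ((finite_corona h d).mem_toFinset.1 hp)
  have hcount : ∀ᵐ t, ∑ p ∈ E, (gapArc d p).indicator (1 : AddCircle (2 * π) → ENNReal) t = 2 := by
    filter_upwards [hP.1.ae_notMem_contactSet d] with t ht
    obtain ⟨a, b, hab, heq⟩ := hP.exists_corona_inter_gapArc_eq h hd ht
    have hfilter : {p ∈ E | t ∈ gapArc d p} = {(a, b), (b, a)} := by
      ext p
      simpa [hE] using Set.ext_iff.1 heq p
    simp only [indicator_apply, Pi.one_apply]
    rw [Finset.sum_boole, hfilter, Finset.card_pair (by simp [hab]), Nat.cast_ofNat]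
  calc ∑ p ∈ E, volume (gapArc d p)
      = ∫⁻ t, ∑ p ∈ E, (gapArc d p).indicator 1 t := by
        rw [lintegral_finsetSum _ fun p hp => measurable_one.indicator (hmeas p hp)]
        exact Finset.sum_congr rfl fun p hp => (lintegral_indicator_one (hmeas p hp)).symm
    _ = 2 * ENNReal.ofReal (2 * π) := by
        rw [lintegral_congr_ae hcount, lintegral_const, AddCircle.measure_univ]

theorem IsCompactPacking.sum_halfAngle_corona (hP : IsCompactPacking P)
    (h : LocallyFinite fun d : P => (d : Disk).set) (hd : d ∈ P) :
    ∑ p ∈ (finite_corona h d).toFinset, halfAngle d.radius⁻¹ p.1.radius⁻¹ p.2.radius⁻¹ =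
      2 * π := by
  have hsum := hP.sum_volume_gapArc h hd
  rw [Finset.sum_congr rfl fun p hp => volume_gapArc ((finite_corona h d).mem_toFinset.1 hp),
    ← ENNReal.ofReal_sum_of_nonneg fun p _ => mul_nonneg two_pos.le (halfAngle_nonneg _ _ _),
    ← Finset.mul_sum, ENNReal.ofReal_mul two_pos.le, ENNReal.ofReal_ofNat] at hsum
  rwa [ENNReal.mul_right_inj two_ne_zero ENNReal.ofNat_ne_top, ENNReal.ofReal_eq_ofReal_iff
    (Finset.sum_nonneg fun p _ => halfAngle_nonneg _ _ _) two_pi_pos.le] at hsum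

end AngleSum

section Curvature

variable {P : Set Disk} {ι : Type*} {κ : ι → ℝ}

lemma IsPacking.locallyFinite_of_radius_inv_mem_range [Finite ι] (hP : IsPacking P)
    (hrange : ∀ d ∈ P, d.radius⁻¹ ∈ range κ) : LocallyFinite fun d : P => (d : Disk).set := by
  obtain ⟨M, hM⟩ := (finite_range κ).bddAbove
  refine hP.locallyFinite (ρ := (max M 1)⁻¹) (by positivity) fun d hd => ?_
  exact inv_le_of_inv_le₀ d.radius_pos ((hM (hrange d hd)).trans (le_max_left M 1))

/-- A choice, for each disk of the packing `P`, of an index at which `κ` takes the curvature of the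
disk as its value. It need not be unique, as `κ` need not be injective. -/
def IsLabelling (P : Set Disk) (κ : ι → ℝ) (l : Disk → ι) : Prop := ∀ d ∈ P, κ (l d) = d.radius⁻¹

lemma exists_isLabelling (hrange : ∀ d ∈ P, d.radius⁻¹ ∈ range κ) {d e : Disk} (hne : d ≠ e)
    {i j : ι} (hi : κ i = d.radius⁻¹) (hj : κ j = e.radius⁻¹) :
    ∃ l, IsLabelling P κ l ∧ l d = i ∧ l e = j := by
  classical
  have (c : Disk) : ∃ k, c ∈ P → κ k = c.radius⁻¹ := by
    by_cases hc : c ∈ P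
    · exact (hrange c hc).imp fun k hk _ => hk
    · exact ⟨i, fun h => absurd h hc⟩
  choose l hl using this
  refine ⟨Function.update (Function.update l d i) e j, fun c hc => ?_, ?_, ?_⟩
  · rcases eq_or_ne c e with rfl | hce
    · simpa
    rcases eq_or_ne c d with rfl | hcd
    · simpa [hce]
    · simpa [hce, hcd] using hl c hc
  · simp [hne]
  · simp

/-- The corona of the disk `d`, read off through a labelling of the disks. -/
noncomputable def labelledCorona (h : LocallyFinite fun d : P => (d : Disk).set) (l : Disk → ι)
    (d : Disk) : Corona ι :=
  (l d, (finite_corona h d).toFinset.val.map (Prod.map l l))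

lemma IsCompactPacking.angleSum_labelledCorona (hP : IsCompactPacking P)
    (h : LocallyFinite fun d : P => (d : Disk).set) {l : Disk → ι} (hl : IsLabelling P κ l)
    {d : Disk} (hd : d ∈ P) : (labelledCorona h l d).angleSum κ = 2 * π := by
  rw [← hP.sum_halfAngle_corona h hd, Corona.angleSum, labelledCorona, Multiset.map_map]
  refine Finset.sum_congr rfl fun p hp => ?_
  obtain ⟨C, hC⟩ := (finite_corona h d).mem_toFinset.1 hp
  simp [hl d hd, hl _ hC.rotate.mem_left, hl _ hC.swap.rotate.mem_left]

lemma IsCompactPacking.exists_isGap_of_mem (hP : IsCompactPacking P)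
    (h : LocallyFinite fun d : P => (d : Disk).set) {d : Disk} (hd : d ∈ P) :
    ∃ C a b, IsGap P C d a b := by
  by_contra! hno
  have hempty : (finite_corona h d).toFinset = ∅ := by
    rw [Finite.toFinset_eq_empty, eq_empty_iff_forall_notMem]
    exact fun p ⟨C, hC⟩ => hno C p.1 p.2 hC
  have hsum := hP.sum_halfAngle_corona h hd
  rw [hempty, Finset.sum_empty] at hsum
  exact two_pi_pos.ne hsum

lemma IsCompactPacking.mem_of_isGap (hP : IsCompactPacking P)
    (h : LocallyFinite fun d : P => (d : Disk).set) (hrange : ∀ d ∈ P, d.radius⁻¹ ∈ range κ)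
    {S : Set ι} (hS : ∀ q : Corona ι, q.angleSum κ = 2 * π → q.1 ∈ S → ∀ p ∈ q.2, p.1 ∈ S ∧ p.2 ∈ S)
    {C : Set Plane} {d a b : Disk} (hC : IsGap P C d a b) {i j : ι} (hi : κ i = d.radius⁻¹)
    (hj : κ j = a.radius⁻¹) (hiS : i ∈ S) : j ∈ S := by
  obtain ⟨l, hl, rfl, rfl⟩ := exists_isLabelling hrange hC.tangent_left.ne hi hj
  exact (hS _ (hP.angleSum_labelledCorona h hl hC.mem_left) hiS (l a, l b)
    (Multiset.mem_map.2 ⟨(a, b), (finite_corona h d).mem_toFinset.2 ⟨C, hC⟩, rfl⟩)).1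

lemma IsCompactPacking.coronasConnected (hP : IsCompactPacking P)
    (h : LocallyFinite fun d : P => (d : Disk).set) (hrange : ∀ d ∈ P, d.radius⁻¹ ∈ range κ)
    (hused : ∀ i, ∃ d ∈ P, κ i = d.radius⁻¹) :
    CoronasConnected {q : Corona ι | q.angleSum κ = 2 * π} := by
  rintro S ⟨i, hi⟩ hS
  have mem_of_isGap {C : Set Plane} {d a b : Disk} (hC : IsGap P C d a b) {i j : ι} :=
    hP.mem_of_isGap h hrange hS hC (i := i) (j := j)
  let Q := {d ∈ P | ∀ j, κ j = d.radius⁻¹ → j ∈ S}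
  have hQ : Q = P := by
    refine hP.eq_of_isGap_closed h (sep_subset _ _) ?_ fun d ⟨hd, hdS⟩ C a b hC => ?_
    · obtain ⟨d, hd, hdi⟩ := hused i
      obtain ⟨C, a, b, hC⟩ := hP.exists_isGap_of_mem h hd
      exact ⟨a, hC.rotate.mem_left, fun j hj => mem_of_isGap hC hdi hj hi⟩
    · obtain ⟨k, hk⟩ := hrange d hd
      exact ⟨hC.rotate.mem_left, fun j hj => mem_of_isGap hC hk hj (hdS k hk)⟩
  refine eq_univ_of_forall fun j => ?_
  obtain ⟨d, hd, hdj⟩ := hused j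
  exact (hQ.ge hd).2 j hdj

theorem finite_setOf_isCompactPacking_curvature [Finite ι] (e : ι) :
    {κ : ι → ℝ | κ e = 1 ∧ ∃ P : Set Disk, IsCompactPacking P ∧
      (∀ d ∈ P, d.radius⁻¹ ∈ range κ) ∧ ∀ i, ∃ d ∈ P, κ i = d.radius⁻¹}.Finite := by
  refine (finite_setOf_solvesCoronas e).subset fun κ ⟨he, P, hP, hrange, hused⟩ => ?_
  have hκ (i : ι) : 0 < κ i := by
    obtain ⟨d, -, hd⟩ := hused i
    exact hd ▸ inv_pos.2 d.radius_pos
  have h := hP.1.locallyFinite_of_radius_inv_mem_range hrange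
  exact ⟨hκ, he, _, hP.coronasConnected h hrange hused, fun q hq => hq⟩

end Curvature

theorem compact_packing_radii_finite_general {ι : Type*} [Finite ι] :
    {r : ι → ℝ | ∃ P : Set Disk, IsCompactPacking P ∧ RadiiIn P (range r ∪ {1}) ∧
      (∀ i, UsesRadius P (r i)) ∧ UsesRadius P 1}.Finite := by
  let κ (r : ι → ℝ) : Option ι → ℝ := fun o => (o.elim 1 r)⁻¹
  have hκ : Function.Injective κ := fun r s h =>
    funext fun i => inv_injective (congrFun h (some i))
  refine ((finite_setOf_isCompactPacking_curvature none).preimage hκ.injOn).subset ?_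
  rintro r ⟨P, hP, hradii, hused, hone⟩
  refine ⟨inv_one, P, hP, fun d hd => ?_, ?_⟩
  · rcases hradii d hd with ⟨i, hi⟩ | hd'
    exacts [⟨some i, congrArg _ hi⟩, ⟨none, congrArg _ (Eq.symm hd')⟩]
  · rintro (_ | i)
    exacts [hone.imp fun d hd => ⟨hd.1, congrArg _ hd.2.symm⟩,
      (hused i).imp fun d hd => ⟨hd.1, congrArg _ hd.2.symm⟩]

/-- for every `n ≥ 1`, there are finitely many tuples
`0 < r₁ < … < r_{n-1} < 1` allowing a compact packing by disks of radii
`r₁, …, r_{n-1}, 1` using all `n` radii. -/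
theorem compact_packing_radii_finite (n : ℕ) (hn : 1 ≤ n) :
    {r : Fin (n - 1) → ℝ | StrictMono r ∧ (∀ i, 0 < r i) ∧ (∀ i, r i < 1) ∧
      ∃ P : Set Disk, IsCompactPacking P ∧ RadiiIn P (Set.range r ∪ {1}) ∧
        (∀ i, UsesRadius P (r i)) ∧ UsesRadius P 1}.Finite :=
  compact_packing_radii_finite_general.subset fun _ h => h.2.2.2
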